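/- Let ℓ : π → ∧²H be a half-intersection cocycle for φ. Then for every element d of the commutator subgroup [π,π], the value ℓ(d) lies in the additive subgroup (ℤ-submodule) of ∧²H generated by the set {φ(g)∧φ(h) : g, h ∈ π}. -/

import Mathlib

/-!
For a biadditive `β` and a homomorphism `φ` to an abelian group, suppose
`ℓ (g * h) = ℓ g + ℓ h + β (φ g) (φ h)`. The correction term vanishes as soon as `φ g = 0`, so
`ℓ` is a homomorphism on the commutator subgroup and is determined there by its values on
commutators. Expanding both sides of `ℓ (⁅g, h⁆ * (h * g)) = ℓ (g * h)` gives
`ℓ ⁅g, h⁆ = β (φ g) (φ h) - β (φ h) (φ g)`. For `β = (1/2) • wedge` this difference is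
`wedge (φ g) (φ h)`, by antisymmetry.
-/

open scoped TensorProduct

/-- The wedge `x ∧ y` as an element of the exterior square `⋀[ℚ]^2 H`. -/
noncomputable def wedge {H : Type*} [AddCommGroup H] [Module ℚ H] (x y : H) : ⋀[ℚ]^2 H :=
  ⟨ExteriorAlgebra.ι ℚ x * ExteriorAlgebra.ι ℚ y, by
    rw [ExteriorAlgebra.exteriorPower, pow_two]
    exact Submodule.mul_mem_mul (LinearMap.mem_range_self _ x) (LinearMap.mem_range_self _ y)⟩

/-- `ℓ : π → ⋀²H` is a half-intersection cocycle for `φ` if `ℓ(1) = 0` and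
`ℓ(gh) = ℓ(g) + ℓ(h) + (1/2)·φ(g)∧φ(h)`. -/
def IsHalfCocycle {π H : Type*} [Group π] [AddCommGroup H] [Module ℚ H]
    (φ : π → H) (ℓ : π → ⋀[ℚ]^2 H) : Prop :=
  ℓ 1 = 0 ∧ ∀ g h : π, ℓ (g * h) = ℓ g + ℓ h + (1/2 : ℚ) • wedge (φ g) (φ h)

open scoped commutatorElement

section BiadditiveDefect

variable {G H A : Type*} [Group G] [AddCommGroup H] [AddCommGroup A]

theorem map_eq_zero_of_mem_commutator {φ : G → H} (hφ : ∀ g h : G, φ (g * h) = φ g + φ h)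
    {d : G} (hd : d ∈ commutator G) : φ d = 0 :=
  let f : G →* Multiplicative H := MonoidHom.mk' (Multiplicative.ofAdd ∘ φ) hφ
  MonoidHom.mem_ker.mp (Abelianization.commutator_subset_ker f hd)

/-- `ℓ` fails to be additive by the biadditive map `β`, pulled back along `φ`. Half-intersection
cocycles are the case `β = (1/2) • wedge`. -/
def HasBiadditiveDefect (β : H →+ H →+ A) (φ : G → H) (ℓ : G → A) : Prop :=
  ∀ g h : G, ℓ (g * h) = ℓ g + ℓ h + β (φ g) (φ h)

namespace HasBiadditiveDefect

variable {β : H →+ H →+ A} {φ : G → H} {ℓ : G → A}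

theorem map_mul_of_map_eq_zero (hℓ : HasBiadditiveDefect β φ ℓ) {x : G} (hx : φ x = 0) (y : G) :
    ℓ (x * y) = ℓ x + ℓ y := by
  simp [hℓ x y, hx]

/-- The restriction of `ℓ` to the commutator subgroup, on which `φ` vanishes, as a group
homomorphism; `Multiplicative` reconciles the notations of source and target. -/
def commutatorHom (hℓ : HasBiadditiveDefect β φ ℓ) (hφ : ∀ g h : G, φ (g * h) = φ g + φ h) :
    commutator G →* Multiplicative A :=
  MonoidHom.mk' (fun x ↦ .ofAdd (ℓ x)) fun x y ↦
    hℓ.map_mul_of_map_eq_zero (map_eq_zero_of_mem_commutator hφ x.2) y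

theorem map_commutatorElement (hℓ : HasBiadditiveDefect β φ ℓ)
    (hφ : ∀ g h : G, φ (g * h) = φ g + φ h) (g h : G) :
    ℓ ⁅g, h⁆ = β (φ g) (φ h) - β (φ h) (φ g) := by
  have hzero : φ ⁅g, h⁆ = 0 := map_eq_zero_of_mem_commutator hφ <|
    Subgroup.commutator_mem_commutator (Subgroup.mem_top g) (Subgroup.mem_top h)
  have hmul : ⁅g, h⁆ * (h * g) = g * h := by group
  have hsum : ℓ (g * h) = ℓ ⁅g, h⁆ + ℓ (h * g) := by
    rw [← hmul, hℓ.map_mul_of_map_eq_zero hzero]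
  rw [eq_sub_of_add_eq hsum.symm, hℓ g h, hℓ h g]
  abel

end HasBiadditiveDefect

theorem ell_commutatorSubgroup_mem_general {β : H →+ H →+ A} {φ : G → H} {ℓ : G → A}
    (hφ : ∀ g h : G, φ (g * h) = φ g + φ h) (hℓ : HasBiadditiveDefect β φ ℓ)
    {d : G} (hd : d ∈ commutator G) :
    ℓ d ∈ AddSubgroup.closure {u : A | ∃ g h : G, u = β (φ g) (φ h) - β (φ h) (φ g)} := by
  set S := AddSubgroup.closure {u : A | ∃ g h : G, u = β (φ g) (φ h) - β (φ h) (φ g)}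
  let K : Subgroup (commutator G) := S.toSubgroup.comap (hℓ.commutatorHom hφ)
  have hle : commutator G ≤ K.map (commutator G).subtype :=
    Subgroup.commutator_le.mpr fun g hg h hh ↦
      ⟨⟨⁅g, h⁆, Subgroup.commutator_mem_commutator hg hh⟩,
        AddSubgroup.subset_closure ⟨g, h, hℓ.map_commutatorElement hφ g h⟩, rfl⟩
  obtain ⟨x, hx, rfl⟩ := hle hd
  exact hx

end BiadditiveDefect

section Wedge

variable {H : Type*} [AddCommGroup H] [Module ℚ H]

theorem wedge_add_left (x x' y : H) : wedge (x + x') y = wedge x y + wedge x' y :=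
  Subtype.ext (by simp [wedge, add_mul])

theorem wedge_add_right (x y y' : H) : wedge x (y + y') = wedge x y + wedge x y' :=
  Subtype.ext (by simp [wedge, mul_add])

theorem wedge_swap (x y : H) : wedge y x = -wedge x y :=
  Subtype.ext (eq_neg_of_add_eq_zero_left (ExteriorAlgebra.ι_add_mul_swap y x))

/-- Half the wedge product, as a biadditive map: the defect of half-intersection cocycles. -/
noncomputable def halfWedge : H →+ H →+ ⋀[ℚ]^2 H :=
  AddMonoidHom.mk'
    (fun x ↦ AddMonoidHom.mk' (fun y ↦ (1 / 2 : ℚ) • wedge x y) fun y y' ↦ by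
      rw [wedge_add_right, smul_add])
    fun x x' ↦ AddMonoidHom.ext fun y ↦ by simp [wedge_add_left]

theorem halfWedge_apply (x y : H) : halfWedge x y = (1 / 2 : ℚ) • wedge x y := rfl

theorem halfWedge_sub_swap (x y : H) : halfWedge x y - halfWedge y x = wedge x y := by
  rw [halfWedge_apply, halfWedge_apply, wedge_swap x y]
  module

theorem IsHalfCocycle.hasBiadditiveDefect {π : Type*} [Group π] {φ : π → H} {ℓ : π → ⋀[ℚ]^2 H}
    (hℓ : IsHalfCocycle φ ℓ) : HasBiadditiveDefect halfWedge φ ℓ :=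
  hℓ.2

end Wedge

theorem ell_commutatorSubgroup_mem {π H : Type*} [Group π] [AddCommGroup H] [Module ℚ H]
    (φ : π → H) (hφ : ∀ g h : π, φ (g * h) = φ g + φ h)
    (ℓ : π → ⋀[ℚ]^2 H) (hℓ : IsHalfCocycle φ ℓ)
    (d : π) (hd : d ∈ commutator π) :
    ℓ d ∈ AddSubgroup.closure {u : ⋀[ℚ]^2 H | ∃ g h : π, u = wedge (φ g) (φ h)} := by
  simpa only [halfWedge_sub_swap] using
    ell_commutatorSubgroup_mem_general hφ hℓ.hasBiadditiveDefect hd
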